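/- arXiv:1811.00049 — 2 statements merged into one kernel-verified Lean document; each statement's English description precedes it below -/
import Mathlib

section
/- Let f ≤ h and let w be a divisor of q+1. Let L̄ ≤ M_ℓ be a subgroup such that |L̄ ∩ Z| = w and L̄ is the internal direct product of L̄ ∩ Z and an elementary abelian 2-subgroup E of order 2^f (i.e. L̄ is generated by E and L̄ ∩ Z, and E ∩ (L̄ ∩ Z) is trivial). Then the number N of orbits of L̄ acting on O equals q/2^f + 1 + (q/2^f)·(q²−1)/w. -/
/-!
The orbits are counted with Burnside's lemma. As `Z` centralizes `M_ℓ` and has odd order, `L` is the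
direct product of `E` and `W = L ∩ Z`, and the fixed points of a product `e * z` can be read off
from the two factors.

The curve has `q³ - q` affine points `(x : y : 1)` and `q + 1` points `(u : 1 : 0)` at infinity.
If `e * z` fixes an affine point, then so does its square `z²`, which is `diag(ε², ε², 1)`; hence
`ε = 1`. An involution `e = [a, c, τ]` has `τ = 1`, and such a matrix fixes `(x : y : 1)` on the
curve only if it fixes the first column of `[x, y, 1]`, which forces `e = 1`. So only the identity
fixes affine points.

At infinity `z` acts trivially, and `e = [a, c, 1]` fixes `(u : 1 : 0)` exactly if `c u² = c ^ q`.
As squaring is bijective in characteristic two, this holds for all `u` if `e = 1` and for exactly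
one `u` otherwise. Summing up, `N |E| |W| = (q³ - q) + |W| (q + |E|)`.
-/

open Matrix

noncomputable def glAct {F : Type*} [Field F] (M : GL (Fin 3) F)
    (x : Projectivization F (Fin 3 → F)) : Projectivization F (Fin 3 → F) :=
  Projectivization.map
    ((LinearMap.GeneralLinearGroup.generalLinearEquiv F (Fin 3 → F)
        (Matrix.GeneralLinearGroup.toLin M)).toLinearMap)
    ((LinearMap.GeneralLinearGroup.generalLinearEquiv F (Fin 3 → F)
        (Matrix.GeneralLinearGroup.toLin M)).injective) x

noncomputable def numOrbits {F : Type*} [Field F] (L : Subgroup (GL (Fin 3) F))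
    (O : Set (Projectivization F (Fin 3 → F))) : ℕ :=
  Nat.card ((fun x => {y | ∃ g ∈ L, glAct g x = y}) '' O :
    Set (Set (Projectivization F (Fin 3 → F))))

def hermitianPts (q : ℕ) (F : Type*) [Field F] : Set (Projectivization F (Fin 3 → F)) :=
  {x | x.rep 1 ^ (q + 1) = x.rep 0 ^ (q + 1) - x.rep 2 ^ (q + 1)}

def MlSet (q : ℕ) (F : Type*) [Field F] : Set (GL (Fin 3) F) :=
  {M | ∃ a c τ : F, a ^ (q + 1) - c ^ (q + 1) = 1 ∧ τ ^ (q + 1) = 1 ∧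
    (M : Matrix (Fin 3) (Fin 3) F) = !![a, τ * c ^ q, 0; c, τ * a ^ q, 0; 0, 0, 1]}

def ZSet (q : ℕ) (F : Type*) [Field F] : Set (GL (Fin 3) F) :=
  {M | ∃ ε : F, ε ^ (q + 1) = 1 ∧ (M : Matrix (Fin 3) (Fin 3) F) = Matrix.diagonal ![ε, ε, 1]}

namespace HermitianOrbits

section Group

lemma ncard_pow_eq_of_card_eq_mul {G : Type*} [CommGroup G] [Finite G] [IsCyclic G] {m k : ℕ}
    (hG : Nat.card G = m * k) {t : G} (ht : t ^ k = 1) : {x : G | x ^ m = t}.ncard = m := by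
  have hpos : 0 < m * k := hG ▸ Nat.card_pos
  have hle : (powMonoidHom m : G →* G).range ≤ (powMonoidHom k).ker := by
    rintro _ ⟨y, rfl⟩
    rw [MonoidHom.mem_ker, powMonoidHom_apply, powMonoidHom_apply, ← pow_mul, ← hG,
      pow_card_eq_one']
  have hcard : Nat.card (powMonoidHom k : G →* G).ker =
      Nat.card (powMonoidHom m : G →* G).range := by
    rw [IsCyclic.card_powMonoidHom_ker, IsCyclic.card_powMonoidHom_range, hG, Nat.gcd_mul_left_left,
      Nat.gcd_mul_right_left, Nat.mul_div_cancel_left k (Nat.pos_of_mul_pos_right hpos)]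
  obtain ⟨y, rfl⟩ : t ∈ (powMonoidHom m : G →* G).range := by
    rw [Subgroup.eq_of_le_of_card_ge hle hcard.le]
    exact ht
  calc {x : G | x ^ m = powMonoidHom m y}.ncard
      = (powMonoidHom m ⁻¹' {powMonoidHom m y} : Set G).ncard := rfl
    _ = Nat.card (powMonoidHom m : G →* G).ker :=
      Nat.card_congr ((powMonoidHom m : G →* G).fiberEquivKer y)
    _ = m := by rw [IsCyclic.card_powMonoidHom_ker, hG, Nat.gcd_mul_right_left]

lemma orbitRel_eq_ker_orbit {G X : Type*} [Group G] [MulAction G X] (O : SubMulAction G X) :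
    MulAction.orbitRel G O = Setoid.ker fun x : O => MulAction.orbit G (x : X) := by
  ext x y
  rw [MulAction.orbitRel_apply, SubMulAction.mem_orbit_subMul_iff, Setoid.ker_def,
    MulAction.orbit_eq_iff]

lemma sum_ncard_inter_fixedBy_eq_ncard_orbits_mul_card {G X : Type*} [Group G] [Fintype G]
    [MulAction G X] {O : Set X} (hO : O.Finite) (hinv : ∀ (g : G), ∀ x ∈ O, g • x ∈ O) :
    ∑ g : G, (O ∩ MulAction.fixedBy X g).ncard =
      (MulAction.orbit G '' O).ncard * Nat.card G := by
  classical
  let S : SubMulAction G X := ⟨O, fun g {x} hx => hinv g x hx⟩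
  have : Fintype S := hO.fintype
  have hfix (g : G) : Fintype.card (MulAction.fixedBy S g) = (O ∩ MulAction.fixedBy X g).ncard := by
    rw [← Nat.card_eq_fintype_card]
    refine Nat.card_congr ((Equiv.subtypeEquivRight fun x => ?_).trans
      (Equiv.subtypeSubtypeEquivSubtypeInter (· ∈ O) (· ∈ MulAction.fixedBy X g)))
    exact Subtype.ext_iff
  have horb : Fintype.card (MulAction.orbitRel.Quotient G S) = (MulAction.orbit G '' O).ncard := by
    rw [← Nat.card_eq_fintype_card, Set.image_eq_range]
    exact Nat.card_congr ((Quotient.congrRight fun x y => by rw [orbitRel_eq_ker_orbit]).trans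
      (Setoid.quotientKerEquivRange fun x : S => MulAction.orbit G (x : X)))
  have hburnside := MulAction.sum_card_fixedBy_eq_card_orbits_mul_card_group G S
  simpa only [hfix, horb, Nat.card_eq_fintype_card] using hburnside

/-- The internal direct product of two commuting subgroups with trivial intersection, as an
isomorphism from the external one. -/
noncomputable def prodMulEquivSup {G : Type*} [Group G] {E W : Subgroup G}
    (hcomm : ∀ e : E, ∀ z : W, Commute (e : G) z) (hdisj : Disjoint E W) :
    E × W ≃* ↥(E ⊔ W) :=
  (MonoidHom.ofInjective ((MonoidHom.noncommCoprod_injective E.subtype W.subtype hcomm).2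
      ⟨E.subtype_injective, W.subtype_injective, by simpa using hdisj⟩)).trans
    (MulEquiv.subgroupCongr
      ((MonoidHom.noncommCoprod_range E.subtype W.subtype hcomm).trans
        (by rw [E.range_subtype, W.range_subtype])))

lemma coe_prodMulEquivSup {G : Type*} [Group G] {E W : Subgroup G}
    (hcomm : ∀ e : E, ∀ z : W, Commute (e : G) z) (hdisj : Disjoint E W) (p : E × W) :
    (prodMulEquivSup hcomm hdisj p : G) = p.1 * p.2 := rfl

end Group

section SquareOrderField

variable {F : Type*} [Field F] [Fintype F] {q : ℕ}

lemma one_lt_of_card_eq_sq (hF : Fintype.card F = q ^ 2) : 1 < q :=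
  (one_lt_pow_iff two_ne_zero).1 (hF ▸ Fintype.one_lt_card)

lemma pow_pow_of_card_eq_sq (hF : Fintype.card F = q ^ 2) (x : F) : (x ^ q) ^ q = x := by
  rw [← pow_mul, ← sq, ← hF, FiniteField.pow_card]

lemma exists_charP_of_card_eq_sq (hF : Fintype.card F = q ^ 2) :
    ∃ p n : ℕ, p.Prime ∧ CharP F p ∧ q = p ^ n := by
  obtain ⟨p, hchar, n, hp, hcard⟩ := FiniteField.card' F
  obtain ⟨k, -, hk⟩ := (Nat.dvd_prime_pow hp).1 (hcard ▸ hF ▸ dvd_pow_self q two_ne_zero)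
  exact ⟨p, k, hp, hchar, hk⟩

lemma add_pow_of_card_eq_sq (hF : Fintype.card F = q ^ 2) (x y : F) :
    (x + y) ^ q = x ^ q + y ^ q := by
  obtain ⟨p, n, hp, _, rfl⟩ := exists_charP_of_card_eq_sq hF
  have := Fact.mk hp
  exact add_pow_char_pow x y p n

lemma sub_pow_of_card_eq_sq (hF : Fintype.card F = q ^ 2) (x y : F) :
    (x - y) ^ q = x ^ q - y ^ q := by
  obtain ⟨p, n, hp, _, rfl⟩ := exists_charP_of_card_eq_sq hF
  have := Fact.mk hp
  exact sub_pow_char_pow x y n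

lemma norm_pow_of_card_eq_sq (hF : Fintype.card F = q ^ 2) (x : F) :
    (x ^ (q + 1)) ^ q = x ^ (q + 1) := by
  rw [pow_right_comm, pow_succ, pow_succ, pow_pow_of_card_eq_sq hF, mul_comm]

lemma ncard_norm_eq [DecidableEq F] (hF : Fintype.card F = q ^ 2) {t : F} (ht : t ^ q = t) :
    {x : F | x ^ (q + 1) = t}.ncard = if t = 0 then 1 else q + 1 := by
  split_ifs with h0
  · simp [h0]
  · have hunits : Nat.card Fˣ = (q + 1) * (q - 1) := by
      rw [Nat.card_eq_fintype_card, Fintype.card_units, hF, ← Nat.sq_sub_sq, one_pow]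
    have ht' : Units.mk0 t h0 ^ (q - 1) = 1 := by
      ext
      have hq : q = q - 1 + 1 := (Nat.sub_add_cancel (one_lt_of_card_eq_sq hF).le).symm
      rw [hq, pow_succ] at ht
      simpa using mul_right_cancel₀ h0 (ht.trans (one_mul t).symm)
    have himage : {x : F | x ^ (q + 1) = t} =
        Units.val '' {x : Fˣ | x ^ (q + 1) = Units.mk0 t h0} := by
      ext x
      refine ⟨fun hx => ?_, ?_⟩
      · have hx0 : x ≠ 0 := by
          rintro rfl
          exact h0 (by simpa using hx.symm)
        exact ⟨Units.mk0 x hx0, Units.ext hx, rfl⟩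
      · rintro ⟨y, hy, rfl⟩
        exact congrArg Units.val hy
    rw [himage, Set.ncard_image_of_injective _ Units.val_injective,
      ncard_pow_eq_of_card_eq_mul hunits ht']

/-- The elements of norm one over the subfield of order `q`, that is, the points `(u : 1 : 0)` of
the Hermitian curve. -/
def normOne (q : ℕ) (F : Type*) [Field F] : Set F := {u | u ^ (q + 1) = 1}

/-- The affine part `Z = 1` of the Hermitian curve. -/
def affineCurve (q : ℕ) (F : Type*) [Field F] : Set (F × F) :=
  {p | p.1 ^ (q + 1) - p.2 ^ (q + 1) = 1}

lemma ncard_normOne (hF : Fintype.card F = q ^ 2) : (normOne q F).ncard = q + 1 := by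
  classical
  exact (ncard_norm_eq hF (one_pow q)).trans (if_neg one_ne_zero)

lemma ncard_affineCurve (hF : Fintype.card F = q ^ 2) :
    (affineCurve q F).ncard = q ^ 3 - q := by
  classical
  have hfiber (x : F) : Nat.card {y : F // x ^ (q + 1) - y ^ (q + 1) = 1} =
      if x ^ (q + 1) = 1 then 1 else q + 1 := by
    have hfix : (x ^ (q + 1) - 1) ^ q = x ^ (q + 1) - 1 := by
      rw [sub_pow_of_card_eq_sq hF, norm_pow_of_card_eq_sq hF, one_pow]
    rw [← sub_eq_zero (b := 1), ← ncard_norm_eq hF hfix, ← Nat.card_coe_set_eq]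
    exact Nat.card_congr (Equiv.subtypeEquivRight fun y => by
      rw [Set.mem_ofPred_eq, sub_eq_iff_eq_add', eq_sub_iff_add_eq, eq_comm])
  have hone : (Finset.univ.filter fun x : F => x ^ (q + 1) = 1).card = q + 1 := by
    rw [← Set.ncard_coe_finset, Finset.coe_filter_univ]
    exact ncard_normOne hF
  have hne := Finset.card_filter_add_card_filter_not (s := .univ) fun x : F => x ^ (q + 1) = 1
  rw [Finset.card_univ, hone, hF] at hne
  have hsum : (affineCurve q F).ncard =
      (q + 1) + (Finset.univ.filter fun x : F => ¬ x ^ (q + 1) = 1).card * (q + 1) := by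
    rw [← Nat.card_coe_set_eq]
    refine (Nat.card_congr (Equiv.subtypeProdEquivSigmaSubtype
      fun x y : F => x ^ (q + 1) - y ^ (q + 1) = 1)).trans ?_
    simp only [Nat.card_sigma, hfiber, Finset.sum_ite, Finset.sum_const, smul_eq_mul, mul_one, hone]
  refine hsum.trans (eq_tsub_of_add_eq ?_)
  linear_combination (q + 1) * hne

end SquareOrderField

section Points

variable {F : Type*} [Field F] {q : ℕ}

lemma glAct_eq_smul (g : GL (Fin 3) F) (x : Projectivization F (Fin 3 → F)) :
    glAct g x = g • x := rfl

lemma mk_mem_hermitianPts_iff {v : Fin 3 → F} (hv : v ≠ 0) :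
    Projectivization.mk F v hv ∈ hermitianPts q F ↔
      v 1 ^ (q + 1) = v 0 ^ (q + 1) - v 2 ^ (q + 1) := by
  obtain ⟨a, ha⟩ := Projectivization.exists_smul_eq_mk_rep F v hv
  have ha0 : (a : F) ^ (q + 1) ≠ 0 := pow_ne_zero _ a.ne_zero
  have hrep (i : Fin 3) : (Projectivization.mk F v hv).rep i = a * v i := (congrFun ha i).symm
  simp only [hermitianPts, Set.mem_ofPred_eq, hrep, mul_pow, ← mul_sub]
  exact mul_right_inj' ha0

lemma vec_affine_ne_zero (x y : F) : ![x, y, 1] ≠ 0 :=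
  fun h => one_ne_zero (congrFun h 2)

lemma vec_infinity_ne_zero (u : F) : ![u, 1, 0] ≠ 0 :=
  fun h => one_ne_zero (congrFun h 1)

/-- The point `(x : y : 1)`, where `p = (x, y)`. -/
def affinePt (p : F × F) : Projectivization F (Fin 3 → F) :=
  Projectivization.mk F ![p.1, p.2, 1] (vec_affine_ne_zero p.1 p.2)

/-- The point `(u : 1 : 0)` of the line at infinity `Z = 0`. -/
def infinityPt (u : F) : Projectivization F (Fin 3 → F) :=
  Projectivization.mk F ![u, 1, 0] (vec_infinity_ne_zero u)

lemma mk_eq_affinePt_iff {v : Fin 3 → F} (hv : v ≠ 0) {p : F × F} :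
    Projectivization.mk F v hv = affinePt p ↔ v 0 = v 2 * p.1 ∧ v 1 = v 2 * p.2 := by
  rw [affinePt, Projectivization.mk_eq_mk_iff']
  constructor
  · rintro ⟨a, rfl⟩
    simp
  · rintro ⟨h0, h1⟩
    refine ⟨v 2, ?_⟩
    ext i
    fin_cases i <;> simp [h0, h1]

lemma mk_eq_infinityPt_iff {v : Fin 3 → F} (hv : v ≠ 0) {u : F} :
    Projectivization.mk F v hv = infinityPt u ↔ v 0 = v 1 * u ∧ v 2 = 0 := by
  rw [infinityPt, Projectivization.mk_eq_mk_iff']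
  constructor
  · rintro ⟨a, rfl⟩
    simp
  · rintro ⟨h0, h2⟩
    refine ⟨v 1, ?_⟩
    ext i
    fin_cases i <;> simp [h0, h2]

lemma affinePt_injective : Function.Injective (affinePt (F := F)) := by
  intro p p' h
  simpa [Prod.ext_iff] using (mk_eq_affinePt_iff _).1 h

lemma infinityPt_injective : Function.Injective (infinityPt (F := F)) := by
  intro u u' h
  simpa using (mk_eq_infinityPt_iff _).1 h

lemma affinePt_ne_infinityPt (p : F × F) (u : F) : affinePt p ≠ infinityPt u := fun h =>
  one_ne_zero ((mk_eq_infinityPt_iff _).1 h).2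

lemma affinePt_mem_hermitianPts_iff {p : F × F} :
    affinePt p ∈ hermitianPts q F ↔ p ∈ affineCurve q F := by
  rw [affinePt, mk_mem_hermitianPts_iff, affineCurve, Set.mem_ofPred_eq, eq_sub_iff_add_eq,
    sub_eq_iff_eq_add', eq_comm]
  simp

lemma infinityPt_mem_hermitianPts_iff {u : F} :
    infinityPt u ∈ hermitianPts q F ↔ u ∈ normOne q F := by
  rw [infinityPt, mk_mem_hermitianPts_iff, normOne, Set.mem_ofPred_eq, eq_comm]
  simp

lemma hermitianPts_eq_union :
    hermitianPts q F = affinePt '' affineCurve q F ∪ infinityPt '' normOne q F := by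
  refine Set.Subset.antisymm (fun x hx => ?_) ?_
  · induction x using Projectivization.ind with
    | h v hv =>
      by_cases h2 : v 2 = 0
      · have h1 : v 1 ≠ 0 := by
          intro h1
          have h0 : v 0 = 0 := by
            simpa [h1, h2] using ((mk_mem_hermitianPts_iff hv).1 hx).symm
          exact hv (by ext i; fin_cases i <;> simp [h0, h1, h2])
        have hmk : Projectivization.mk F v hv = infinityPt (v 0 / v 1) :=
          (mk_eq_infinityPt_iff hv).2 ⟨(mul_div_cancel₀ _ h1).symm, h2⟩
        rw [hmk] at hx ⊢
        exact .inr (Set.mem_image_of_mem _ (infinityPt_mem_hermitianPts_iff.1 hx))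
      · have hmk : Projectivization.mk F v hv = affinePt (v 0 / v 2, v 1 / v 2) :=
          (mk_eq_affinePt_iff hv).2
            ⟨(mul_div_cancel₀ _ h2).symm, (mul_div_cancel₀ _ h2).symm⟩
        rw [hmk] at hx ⊢
        exact .inl (Set.mem_image_of_mem _ (affinePt_mem_hermitianPts_iff.1 hx))
  · rintro _ (⟨p, hp, rfl⟩ | ⟨u, hu, rfl⟩)
    · exact affinePt_mem_hermitianPts_iff.2 hp
    · exact infinityPt_mem_hermitianPts_iff.2 hu

lemma ncard_hermitianPts_inter [Finite F] (S : Set (Projectivization F (Fin 3 → F))) :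
    (hermitianPts q F ∩ S).ncard =
      (affineCurve q F ∩ affinePt ⁻¹' S).ncard + (normOne q F ∩ infinityPt ⁻¹' S).ncard := by
  have hdisj : Disjoint (affinePt '' (affineCurve q F ∩ affinePt ⁻¹' S))
      (infinityPt '' (normOne q F ∩ infinityPt ⁻¹' S)) := by
    rw [Set.disjoint_left]
    rintro _ ⟨p, -, rfl⟩ ⟨u, -, hu⟩
    exact affinePt_ne_infinityPt p u hu.symm
  rw [hermitianPts_eq_union, Set.union_inter_distrib_right, ← Set.image_inter_preimage,
    ← Set.image_inter_preimage, Set.ncard_union_eq hdisj,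
    Set.ncard_image_of_injective _ affinePt_injective,
    Set.ncard_image_of_injective _ infinityPt_injective]

end Points

section UnitaryMatrices

variable {F : Type*} [Field F] {q : ℕ}

/-- The matrix `[a, c, τ]` of the paper; the group `M_ℓ` consists of those with
`a ^ (q + 1) - c ^ (q + 1) = 1` and `τ ^ (q + 1) = 1`. -/
def mlMatrix (q : ℕ) (a c τ : F) : Matrix (Fin 3) (Fin 3) F :=
  !![a, τ * c ^ q, 0; c, τ * a ^ q, 0; 0, 0, 1]

lemma mlMatrix_mulVec (a c τ : F) (v : Fin 3 → F) :
    mlMatrix q a c τ *ᵥ v =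
      ![a * v 0 + τ * c ^ q * v 1, c * v 0 + τ * a ^ q * v 1, v 2] := by
  ext i
  fin_cases i <;> simp [mlMatrix, Matrix.mulVec, dotProduct, Fin.sum_univ_three]

lemma det_mlMatrix (a c τ : F) :
    (mlMatrix q a c τ).det = τ * (a ^ (q + 1) - c ^ (q + 1)) := by
  simp only [mlMatrix, Matrix.det_fin_three, Matrix.of_apply, Matrix.cons_val, pow_succ]
  ring

lemma mlMatrix_one_zero_one (hq : q ≠ 0) : mlMatrix q (1 : F) 0 1 = 1 := by
  ext i j
  fin_cases i <;> fin_cases j <;> simp [mlMatrix, hq]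

lemma smul_mk_of_coe_eq_mlMatrix {g : GL (Fin 3) F} {a c τ : F} (hg : g.val = mlMatrix q a c τ)
    {v : Fin 3 → F} (hv : v ≠ 0) :
    ∃ hw, g • Projectivization.mk F v hv = Projectivization.mk F
      ![a * v 0 + τ * c ^ q * v 1, c * v 0 + τ * a ^ q * v 1, v 2] hw := by
  have hgv : g • v = ![a * v 0 + τ * c ^ q * v 1, c * v 0 + τ * a ^ q * v 1, v 2] := by
    rw [← mlMatrix_mulVec, ← hg]
    rfl
  rw [Projectivization.smul_mk]
  exact ⟨hgv ▸ (smul_ne_zero_iff_ne g).2 hv, by congr 1⟩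

lemma smul_affinePt_eq_iff {g : GL (Fin 3) F} {a c τ : F} (hg : g.val = mlMatrix q a c τ)
    {p : F × F} : g • affinePt p = affinePt p ↔
      a * p.1 + τ * c ^ q * p.2 = p.1 ∧ c * p.1 + τ * a ^ q * p.2 = p.2 := by
  obtain ⟨hw, h⟩ := smul_mk_of_coe_eq_mlMatrix hg (vec_affine_ne_zero p.1 p.2)
  conv_lhs => rw [affinePt, h, ← affinePt, mk_eq_affinePt_iff]
  simp

lemma smul_infinityPt_eq_iff {g : GL (Fin 3) F} {a c τ : F} (hg : g.val = mlMatrix q a c τ)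
    {u : F} : g • infinityPt u = infinityPt u ↔
      a * u + τ * c ^ q = (c * u + τ * a ^ q) * u := by
  obtain ⟨hw, h⟩ := smul_mk_of_coe_eq_mlMatrix hg (vec_infinity_ne_zero u)
  conv_lhs => rw [infinityPt, h, ← infinityPt, mk_eq_infinityPt_iff]
  simp

lemma smul_mem_hermitianPts [Fintype F] (hF : Fintype.card F = q ^ 2) {g : GL (Fin 3) F}
    (hg : g ∈ MlSet q F) {x : Projectivization F (Fin 3 → F)} (hx : x ∈ hermitianPts q F) :
    g • x ∈ hermitianPts q F := by
  obtain ⟨a, c, τ, hac, hτ, hg⟩ := hg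
  induction x using Projectivization.ind with
  | h v hv =>
    obtain ⟨hw, h⟩ := smul_mk_of_coe_eq_mlMatrix hg hv
    rw [mk_mem_hermitianPts_iff] at hx
    rw [h, mk_mem_hermitianPts_iff]
    simp only [pow_succ _ q] at hac hτ hx
    simp only [Matrix.cons_val, pow_succ _ q, add_pow_of_card_eq_sq hF, mul_pow,
      pow_pow_of_card_eq_sq hF]
    linear_combination (a ^ q * a - c ^ q * c) * hx - v 2 ^ q * v 2 * hac +
      (a ^ q * a - c ^ q * c) * v 1 ^ q * v 1 * hτ

/-- The center `Z` of `M_ℓ` as a subgroup. -/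
def centerSubgroup (q : ℕ) (F : Type*) [Field F] : Subgroup (GL (Fin 3) F) where
  carrier := ZSet q F
  one_mem' := ⟨1, one_pow _, by ext i j; fin_cases i <;> fin_cases j <;> simp⟩
  mul_mem' := by
    rintro g g' ⟨ε, hε, hg⟩ ⟨ε', hε', hg'⟩
    refine ⟨ε * ε', by rw [mul_pow, hε, hε', one_mul], ?_⟩
    rw [Units.val_mul, hg, hg', Matrix.diagonal_mul_diagonal]
    congr 1
    ext i
    fin_cases i <;> simp
  inv_mem' := by
    rintro g ⟨ε, hε, hg⟩
    have hε0 : ε ≠ 0 := by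
      rintro rfl
      simp at hε
    refine ⟨ε⁻¹, by rw [inv_pow, hε, inv_one], Units.inv_eq_of_mul_eq_one_right ?_⟩
    rw [hg, Matrix.diagonal_mul_diagonal, ← Matrix.diagonal_one]
    congr 1
    ext i
    fin_cases i <;> simp [hε0]

lemma commute_of_mem_MlSet_of_mem_centerSubgroup {g z : GL (Fin 3) F} (hg : g ∈ MlSet q F)
    (hz : z ∈ centerSubgroup q F) : Commute g z := by
  obtain ⟨a, c, τ, -, -, hg⟩ := hg
  obtain ⟨ε, -, hz⟩ := hz
  refine Units.ext ?_
  rw [Units.val_mul, Units.val_mul, hg, hz]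
  ext i j
  fin_cases i <;> fin_cases j <;> simp [mul_comm]

end UnitaryMatrices

section FixedPoints

variable {F : Type*} [Field F] {q : ℕ}

lemma exists_coe_eq_mlMatrix_of_mem_centerSubgroup (hq : q ≠ 0) {z : GL (Fin 3) F}
    (hz : z ∈ centerSubgroup q F) :
    ∃ ε : F, ε ^ (q + 1) = 1 ∧ z.val = mlMatrix q ε 0 (ε ^ 2) := by
  obtain ⟨ε, hε, hz⟩ := hz
  refine ⟨ε, hε, ?_⟩
  have hεq : ε ^ 2 * ε ^ q = ε := by linear_combination ε * hε
  rw [hz, mlMatrix, hεq]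
  ext i j
  fin_cases i <;> fin_cases j <;> simp [hq]

lemma centerSubgroup_subset_MlSet (hq : q ≠ 0) : (centerSubgroup q F : Set _) ⊆ MlSet q F := by
  intro z hz
  obtain ⟨ε, hε, hz⟩ := exists_coe_eq_mlMatrix_of_mem_centerSubgroup hq hz
  exact ⟨ε, 0, ε ^ 2, by simp [hε], by rw [pow_right_comm, hε, one_pow], hz⟩

lemma smul_infinityPt_of_mem_centerSubgroup (hq : q ≠ 0) {z : GL (Fin 3) F}
    (hz : z ∈ centerSubgroup q F) (u : F) : z • infinityPt u = infinityPt u := by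
  obtain ⟨ε, hε, hz⟩ := exists_coe_eq_mlMatrix_of_mem_centerSubgroup hq hz
  rw [smul_infinityPt_eq_iff hz, zero_pow hq]
  linear_combination -ε * u * hε

lemma eq_one_of_mem_centerSubgroup_of_smul_affinePt_eq (hq : q ≠ 0) {z : GL (Fin 3) F}
    (hz : z ∈ centerSubgroup q F) {p : F × F} (hp : p ∈ affineCurve q F)
    (hfix : z • affinePt p = affinePt p) : z = 1 := by
  obtain ⟨ε, hε, hzε⟩ := exists_coe_eq_mlMatrix_of_mem_centerSubgroup hq hz
  rw [smul_affinePt_eq_iff hzε, zero_pow hq] at hfix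
  obtain ⟨h1, h2⟩ := hfix
  have hp : p.1 ^ (q + 1) - p.2 ^ (q + 1) = 1 := hp
  have hε1 : ε = 1 := by
    linear_combination p.1 ^ q * h1 - p.2 ^ q * h2 + (1 - ε) * hp + ε * p.2 ^ (q + 1) * hε
  exact Units.ext (by rw [hzε, hε1, one_pow, mlMatrix_one_zero_one hq, Units.val_one])

-- `g` fixes the first column of `m = [p.1, p.2, 1]`, and matrices `[a, c, 1]` are determined by
-- their first column, so `g * m = m`.
lemma eq_one_of_coe_eq_mlMatrix_of_smul_affinePt_eq [Fintype F] (hF : Fintype.card F = q ^ 2)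
    {g : GL (Fin 3) F} {a c : F} (hg : g.val = mlMatrix q a c 1) {p : F × F}
    (hp : p ∈ affineCurve q F) (hfix : g • affinePt p = affinePt p) : g = 1 := by
  obtain ⟨h1, h2⟩ := (smul_affinePt_eq_iff hg).1 hfix
  have h1' := congrArg (· ^ q) h1
  have h2' := congrArg (· ^ q) h2
  simp only [add_pow_of_card_eq_sq hF, mul_pow, one_mul, pow_pow_of_card_eq_sq hF]
    at h1' h2'
  have hp : p.1 ^ (q + 1) - p.2 ^ (q + 1) = 1 := hp
  have ha : a = 1 := by linear_combination p.1 ^ q * h1 - p.2 * h2' + (1 - a) * hp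
  have hc : c = 0 := by linear_combination p.1 ^ q * h2 - p.2 * h1' - c * hp
  have hq : q ≠ 0 := (one_lt_of_card_eq_sq hF).ne_bot
  exact Units.ext (by rw [hg, ha, hc, mlMatrix_one_zero_one hq, Units.val_one])

variable [CharP F 2]

lemma sq_eq_one_iff_of_charTwo {x : F} : x ^ 2 = 1 ↔ x = 1 := by
  rw [← CharTwo.sq_inj (x := x) (y := 1), one_pow]

lemma eq_one_of_mem_centerSubgroup_of_sq_eq_one (hq : q ≠ 0) {z : GL (Fin 3) F}
    (hz : z ∈ centerSubgroup q F) (hz2 : z ^ 2 = 1) : z = 1 := by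
  obtain ⟨ε, -, hzε⟩ := exists_coe_eq_mlMatrix_of_mem_centerSubgroup hq hz
  have hsq : mlMatrix q ε 0 (ε ^ 2) * mlMatrix q ε 0 (ε ^ 2) = 1 := by
    rw [← hzε, ← Units.val_mul, ← sq, hz2, Units.val_one]
  have hε : ε ^ 2 = 1 := by
    simpa [mlMatrix, Matrix.mul_apply, Fin.sum_univ_three, ← sq] using
      congrFun (congrFun hsq 0) 0
  refine Units.ext ?_
  rw [hzε, hε, sq_eq_one_iff_of_charTwo.1 hε, mlMatrix_one_zero_one hq, Units.val_one]

lemma exists_coe_eq_mlMatrix_of_sq_eq_one (hq : q ≠ 0) {g : GL (Fin 3) F} (hg : g ∈ MlSet q F)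
    (hg2 : g ^ 2 = 1) : ∃ a c : F, g.val = mlMatrix q a c 1 ∧ a ^ q = a ∧ (g = 1 ↔ c = 0) := by
  obtain ⟨a, c, τ, hac, -, hgM⟩ := hg
  change g.val = mlMatrix q a c τ at hgM
  have hsq : mlMatrix q a c τ * mlMatrix q a c τ = 1 := by
    rw [← hgM, ← Units.val_mul, ← sq, hg2, Units.val_one]
  obtain rfl : τ = 1 := by
    have hdet := congrArg Matrix.det hsq
    rw [Matrix.det_mul, det_mlMatrix, hac, mul_one, Matrix.det_one, ← sq] at hdet
    exact sq_eq_one_iff_of_charTwo.1 hdet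
  have h00 : a * a + c ^ q * c = 1 := by
    simpa [mlMatrix, Matrix.mul_apply, Fin.sum_univ_three] using congrFun (congrFun hsq 0) 0
  have h10 : c * a + a ^ q * c = 0 := by
    simpa [mlMatrix, Matrix.mul_apply, Fin.sum_univ_three] using congrFun (congrFun hsq 1) 0
  have ha1 (hc : c = 0) : a = 1 :=
    sq_eq_one_iff_of_charTwo.1 (by linear_combination h00 - c ^ q * hc)
  refine ⟨a, c, hgM, ?_, fun h => ?_, fun hc => ?_⟩
  · rcases eq_or_ne c 0 with hc | hc
    · rw [ha1 hc, one_pow]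
    · exact mul_right_cancel₀ hc ((CharTwo.add_eq_zero.1 h10).symm.trans (mul_comm c a))
  · simpa [h, mlMatrix] using (congrFun (congrFun hgM 1) 0).symm
  · exact Units.ext (by rw [hgM, ha1 hc, hc, mlMatrix_one_zero_one hq, Units.val_one])

lemma eq_one_of_mul_smul_affinePt_eq [Fintype F] (hF : Fintype.card F = q ^ 2)
    {e z : GL (Fin 3) F} (he : e ∈ MlSet q F) (he2 : e ^ 2 = 1) (hz : z ∈ centerSubgroup q F)
    {p : F × F} (hp : p ∈ affineCurve q F) (hfix : (e * z) • affinePt p = affinePt p) :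
    e = 1 ∧ z = 1 := by
  have hq : q ≠ 0 := (one_lt_of_card_eq_sq hF).ne_bot
  have hsq : (e * z) ^ 2 = z ^ 2 := by
    rw [(commute_of_mem_MlSet_of_mem_centerSubgroup he hz).mul_pow, he2, one_mul]
  have hz2 : z ^ 2 = 1 := by
    refine eq_one_of_mem_centerSubgroup_of_smul_affinePt_eq hq (pow_mem hz 2) hp ?_
    rw [← hsq, sq, mul_smul, hfix, hfix]
  obtain rfl := eq_one_of_mem_centerSubgroup_of_sq_eq_one hq hz hz2
  obtain ⟨a, c, heM, -, -⟩ := exists_coe_eq_mlMatrix_of_sq_eq_one hq he he2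
  rw [mul_one] at hfix
  exact ⟨eq_one_of_coe_eq_mlMatrix_of_smul_affinePt_eq hF heM hp hfix, rfl⟩

lemma ncard_affineCurve_inter_fixedBy_mul [Fintype F] [DecidableEq (GL (Fin 3) F)]
    (hF : Fintype.card F = q ^ 2) {e z : GL (Fin 3) F} (he : e ∈ MlSet q F) (he2 : e ^ 2 = 1)
    (hz : z ∈ centerSubgroup q F) :
    (affineCurve q F ∩ affinePt ⁻¹' MulAction.fixedBy _ (e * z)).ncard =
      if e = 1 ∧ z = 1 then q ^ 3 - q else 0 := by
  split_ifs with h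
  · obtain ⟨rfl, rfl⟩ := h
    rw [mul_one, MulAction.fixedBy_one_eq_univ, Set.preimage_univ, Set.inter_univ,
      ncard_affineCurve hF]
  · rw [Set.ncard_eq_zero, Set.eq_empty_iff_forall_notMem]
    rintro p ⟨hp, hfix⟩
    exact h (eq_one_of_mul_smul_affinePt_eq hF he he2 hz hp hfix)

lemma exists_normOne_iff_mul_sq_eq [Fintype F] (hF : Fintype.card F = q ^ 2) {c : F}
    (hc : c ≠ 0) : ∃ u₀ ∈ normOne q F, ∀ u, c * u ^ 2 = c ^ q ↔ u = u₀ := by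
  obtain ⟨u₀, hu₀⟩ := surjective_frobenius F 2 (c ^ q / c)
  rw [frobenius_def] at hu₀
  refine ⟨u₀, ?_, fun u => ?_⟩
  · have hnorm : (u₀ ^ (q + 1)) ^ 2 = 1 := by
      rw [pow_right_comm, hu₀, div_pow, pow_succ, pow_pow_of_card_eq_sq hF, pow_succ', div_self]
      exact mul_ne_zero hc (pow_ne_zero q hc)
    exact sq_eq_one_iff_of_charTwo.1 hnorm
  · rw [← CharTwo.sq_inj (x := u), hu₀, eq_div_iff hc, mul_comm]

lemma ncard_normOne_inter_fixedBy_mul [Fintype F] [DecidableEq (GL (Fin 3) F)]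
    (hF : Fintype.card F = q ^ 2) {e z : GL (Fin 3) F} (he : e ∈ MlSet q F) (he2 : e ^ 2 = 1)
    (hz : z ∈ centerSubgroup q F) :
    (normOne q F ∩ infinityPt ⁻¹' MulAction.fixedBy _ (e * z)).ncard =
      (if e = 1 then q else 0) + 1 := by
  have hq : q ≠ 0 := (one_lt_of_card_eq_sq hF).ne_bot
  obtain ⟨a, c, heM, ha, he1⟩ := exists_coe_eq_mlMatrix_of_sq_eq_one hq he he2
  have hfix (u : F) :
      u ∈ infinityPt ⁻¹' MulAction.fixedBy _ (e * z) ↔ c * u ^ 2 = c ^ q := by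
    rw [Set.mem_preimage, MulAction.mem_fixedBy, mul_smul,
      smul_infinityPt_of_mem_centerSubgroup hq hz, smul_infinityPt_eq_iff heM, ha, one_mul, one_mul,
      add_mul, mul_comm a u, mul_comm u a, add_comm, add_right_cancel_iff, mul_assoc, ← sq, eq_comm]
  split_ifs with h1
  · have hc := he1.1 h1
    have hall : infinityPt ⁻¹' MulAction.fixedBy _ (e * z) = Set.univ :=
      Set.eq_univ_of_forall fun u => (hfix u).2 (by rw [hc, zero_mul, zero_pow hq])
    rw [hall, Set.inter_univ, ncard_normOne hF]
  · obtain ⟨u₀, hu₀, hunique⟩ := exists_normOne_iff_mul_sq_eq hF (mt he1.2 h1)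
    have hsingle : infinityPt ⁻¹' MulAction.fixedBy _ (e * z) = {u₀} :=
      Set.ext fun u => (hfix u).trans (hunique u)
    rw [hsingle, Set.inter_singleton_of_mem hu₀, Set.ncard_singleton]

lemma ncard_hermitianPts_inter_fixedBy_mul [Fintype F] [DecidableEq (GL (Fin 3) F)]
    (hF : Fintype.card F = q ^ 2) {e z : GL (Fin 3) F} (he : e ∈ MlSet q F) (he2 : e ^ 2 = 1)
    (hz : z ∈ centerSubgroup q F) :
    (hermitianPts q F ∩ MulAction.fixedBy _ (e * z)).ncard =
      (if e = 1 ∧ z = 1 then q ^ 3 - q else 0) + ((if e = 1 then q else 0) + 1) := by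
  rw [ncard_hermitianPts_inter, ncard_affineCurve_inter_fixedBy_mul hF he he2 hz,
    ncard_normOne_inter_fixedBy_mul hF he he2 hz]

end FixedPoints

section OrbitCount

variable {F : Type*} [Field F] {q : ℕ}

lemma numOrbits_eq_ncard_orbits (L : Subgroup (GL (Fin 3) F))
    (O : Set (Projectivization F (Fin 3 → F))) :
    numOrbits L O = (MulAction.orbit L '' O).ncard := by
  have horbit (x : Projectivization F (Fin 3 → F)) :
      {y | ∃ g ∈ L, glAct g x = y} = MulAction.orbit L x := by
    ext y
    simp only [Set.mem_ofPred_eq, glAct_eq_smul, MulAction.mem_orbit_iff, Subtype.exists,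
      Subgroup.mk_smul, exists_prop]
  rw [numOrbits, Nat.card_coe_set_eq]
  simp only [horbit]

lemma sum_ite_eq_one_prod {G H : Type*} [One G] [One H] [Fintype G] [Fintype H]
    [DecidableEq G] [DecidableEq H] (m n : ℕ) :
    ∑ p : G × H, ((if p.1 = 1 ∧ p.2 = 1 then m else 0) + ((if p.1 = 1 then n else 0) + 1)) =
      m + Nat.card H * (n + Nat.card G) := by
  simp only [Fintype.sum_prod_type_right, ite_and, Finset.sum_add_distrib, Finset.sum_ite_eq',
    Finset.mem_univ, if_true, Finset.sum_const, Finset.card_univ, smul_eq_mul, mul_one,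
    Fintype.card_prod, Nat.card_eq_fintype_card]
  ring

theorem numOrbits_sup_mul_card [Fintype F] [CharP F 2] (hF : Fintype.card F = q ^ 2)
    {E W : Subgroup (GL (Fin 3) F)} (hE : (E : Set (GL (Fin 3) F)) ⊆ MlSet q F)
    (hE2 : ∀ e ∈ E, e ^ 2 = 1) (hW : W ≤ centerSubgroup q F) :
    numOrbits (E ⊔ W) (hermitianPts q F) * (Nat.card E * Nat.card W) =
      (q ^ 3 - q) + Nat.card W * (q + Nat.card E) := by
  classical
  have hq : q ≠ 0 := (one_lt_of_card_eq_sq hF).ne_bot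
  have hcomm (e : E) (z : W) : Commute (e : GL (Fin 3) F) z :=
    commute_of_mem_MlSet_of_mem_centerSubgroup (hE e.2) (hW z.2)
  have hdisj : Disjoint E W := Subgroup.disjoint_def.2 fun he hz =>
    eq_one_of_mem_centerSubgroup_of_sq_eq_one hq (hW hz) (hE2 _ he)
  let φ := prodMulEquivSup hcomm hdisj
  have hinv (g : ↥(E ⊔ W)) (x) (hx : x ∈ hermitianPts q F) : g • x ∈ hermitianPts q F := by
    obtain ⟨⟨e, z⟩, rfl⟩ := φ.surjective g
    rw [Subgroup.smul_def, coe_prodMulEquivSup, mul_smul]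
    exact smul_mem_hermitianPts hF (hE e.2)
      (smul_mem_hermitianPts hF (centerSubgroup_subset_MlSet hq (hW z.2)) hx)
  have hfix (p : E × W) : (hermitianPts q F ∩ MulAction.fixedBy _ (φ p)).ncard =
      (if p.1 = 1 ∧ p.2 = 1 then q ^ 3 - q else 0) + ((if p.1 = 1 then q else 0) + 1) := by
    change (hermitianPts q F ∩ MulAction.fixedBy _ (p.1 * p.2 : GL (Fin 3) F)).ncard = _
    simpa only [OneMemClass.coe_eq_one] using
      ncard_hermitianPts_inter_fixedBy_mul hF (hE p.1.2) (hE2 _ p.1.2) (hW p.2.2)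
  calc numOrbits (E ⊔ W) (hermitianPts q F) * (Nat.card E * Nat.card W)
      = ∑ g : ↥(E ⊔ W), (hermitianPts q F ∩ MulAction.fixedBy _ g).ncard := by
        rw [sum_ncard_inter_fixedBy_eq_ncard_orbits_mul_card (Set.toFinite _) hinv,
          numOrbits_eq_ncard_orbits, ← Nat.card_prod, Nat.card_congr φ.toEquiv]
    _ = ∑ p : E × W, (hermitianPts q F ∩ MulAction.fixedBy _ (φ p)).ncard :=
        (φ.toEquiv.sum_comp _).symm
    _ = (q ^ 3 - q) + Nat.card W * (q + Nat.card E) := by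
        simp only [hfix, sum_ite_eq_one_prod]

end OrbitCount

end HermitianOrbits

theorem stmt4 (h q f w : ℕ) (hh : 1 ≤ h) (hq : q = 2 ^ h)
    (F : Type*) [Field F] [Fintype F] (hF : Fintype.card F = q ^ 2)
    (hf : f ≤ h) (hw : w ∣ q + 1)
    (L : Subgroup (GL (Fin 3) F)) (hLMl : (L : Set (GL (Fin 3) F)) ⊆ MlSet q F)
    (hZcard : Nat.card ((L : Set (GL (Fin 3) F)) ∩ ZSet q F : Set (GL (Fin 3) F)) = w)
    (E : Subgroup (GL (Fin 3) F))
    (hEcard : Nat.card E = 2 ^ f)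
    (hEelem : ∀ g ∈ E, g ^ 2 = 1)
    (hgen : L = Subgroup.closure
      ((E : Set (GL (Fin 3) F)) ∪ ((L : Set (GL (Fin 3) F)) ∩ ZSet q F)))
    (htriv : (E : Set (GL (Fin 3) F)) ∩ ((L : Set (GL (Fin 3) F)) ∩ ZSet q F) ⊆ {1}) :
    (numOrbits L (hermitianPts q F) : ℚ)
      = (q : ℚ) / 2 ^ f + 1 + ((q : ℚ) / 2 ^ f) * (((q : ℚ) ^ 2 - 1) / (w : ℚ)) := by
  have : CharP F 2 := charP_of_card_eq_prime_pow (f := h * 2) (by rw [hF, hq, pow_mul])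
  let W := L ⊓ HermitianOrbits.centerSubgroup q F
  have hWcard : Nat.card W = w := hZcard
  have hL : L = E ⊔ W := by rw [Subgroup.sup_eq_closure]; exact hgen
  have hEM : (E : Set (GL (Fin 3) F)) ⊆ MlSet q F := by
    have hEL : E ≤ L := le_sup_left.trans_eq hL.symm
    exact Set.Subset.trans hEL hLMl
  have hcount := HermitianOrbits.numOrbits_sup_mul_card hF hEM hEelem
    (inf_le_right : W ≤ HermitianOrbits.centerSubgroup q F)
  rw [← hL, hEcard, hWcard] at hcount
  have hcountℚ := congrArg (Nat.cast : ℕ → ℚ) hcount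
  push_cast [Nat.cast_sub (Nat.le_self_pow three_ne_zero q)] at hcountℚ
  have hw0 : (w : ℚ) ≠ 0 := Nat.cast_ne_zero.2 (hWcard ▸ Nat.card_pos.ne')
  field_simp
  linear_combination hcountℚ
end

section
/- Let w be a divisor of q+1 and let L̄ ≤ M_ℓ be a subgroup such that |L̄ ∩ Z| = w and the quotient L̄/(L̄ ∩ Z) is isomorphic to SL(2,2) (equivalently, to the symmetric group on 3 letters). If h is even, then the number N of orbits of L̄ acting on O equals (q+8)/6 + (q/2)·((q−1)/3)·((q+1)/w). If h is odd and 3 ∤ w, then N = (q+4)/6 + (q³−q)/(6w). -/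
/-!
Burnside's lemma reduces the count to fixed points, which are counted separately on and off the
line at infinity `Z = 0`; it meets the curve in `q + 1` points and leaves `q ^ 3 - q` affine ones.

At infinity scalars act trivially, whereas the fixed points of a nonscalar element are roots of a
nonzero quadratic, so there are at most two of them. If moreover its `p`-th power is scalar for a
prime `p`, then their number is congruent to `q + 1` modulo `p`; taking `p = 2` and `p = 3`
determines it.

On the affine points the group acts freely. Every element of the symmetric group on three letters
is conjugate to its inverse, so the determinant of any `g` satisfies `det g ^ (2 * w) = 1`, hence
`det (g ^ w) = 1` in characteristic two. Only the identity of `M_ℓ` has determinant one and fixes an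
affine point of the curve, so if `g` fixes such a point then `g ^ w = 1`. As `w` is prime to `6`,
the image of `g` in the quotient is trivial, and a scalar fixing an affine point is the identity.
-/

open Matrix

section GroupTheory

variable {G H : Type*} [Group G] [Group H]

lemma ncard_sep_eq_card_subtype {α : Type*} {S : Set α} {P : α → Prop} {Q : S → Prop}
    (h : ∀ x, Q x ↔ P x) : {x ∈ S | P x}.ncard = Nat.card {x // Q x} :=
  Nat.card_congr ((Equiv.subtypeEquivRight h).trans
    (Equiv.subtypeSubtypeEquivSubtypeInter (· ∈ S) P)).symm

lemma ncard_sep_eq_sdiff_add_inter {α : Type*} {S : Set α} (hS : S.Finite) (T : Set α)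
    (P : α → Prop) :
    {x ∈ S | P x}.ncard = {x ∈ S \ T | P x}.ncard + {x ∈ S ∩ T | P x}.ncard := by
  rw [add_comm, ← Set.ncard_inter_add_ncard_sdiff_eq_ncard {x ∈ S | P x} T (hS.sep P)]
  congr 2 <;> ext x <;> simp only [Set.mem_sdiff, Set.mem_inter_iff, Set.mem_ofPred_eq] <;> tauto

lemma ncard_image_orbit_mul_card {α : Type*} [MulAction G α] [Fintype G] {S : Set α}
    (hfin : S.Finite) (hS : ∀ g : G, ∀ x ∈ S, g • x ∈ S) :
    (MulAction.orbit G '' S).ncard * Nat.card G = ∑ g : G, {x ∈ S | g • x = x}.ncard := by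
  classical
  let T : SubMulAction G α := ⟨S, fun g _ hx => hS g _ hx⟩
  have : Fintype T := hfin.fintype
  have : Fintype (MulAction.orbitRel.Quotient G T) := Fintype.ofFinite _
  have horbits :
      (MulAction.orbit G '' S).ncard = Fintype.card (MulAction.orbitRel.Quotient G T) := by
    have hker : Setoid.ker (fun x : T => MulAction.orbit G (x : α)) = MulAction.orbitRel G T := by
      ext x y
      rw [Setoid.ker_def, MulAction.orbit_eq_iff, ← SubMulAction.mem_orbit_subMul_iff,
        MulAction.orbitRel_apply]
    rw [← Nat.card_eq_fintype_card, MulAction.orbitRel.Quotient, ← hker,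
      Nat.card_congr (Setoid.quotientKerEquivRange _), Set.image_eq_range]
    rfl
  have hfixed (g : G) : {x ∈ S | g • x = x}.ncard = Fintype.card (MulAction.fixedBy T g) :=
    (ncard_sep_eq_card_subtype fun _ => Subtype.ext_iff).trans Nat.card_eq_fintype_card
  rw [horbits, Nat.card_eq_fintype_card,
    ← MulAction.sum_card_fixedBy_eq_card_orbits_mul_card_group G T]
  exact Finset.sum_congr rfl fun g _ => (hfixed g).symm

lemma ncard_modEq_ncard_fixed {M α : Type*} [Monoid M] [MulAction M α] {S : Set α}
    (hfin : S.Finite) {g : M} (hg : ∀ x ∈ S, g • x ∈ S) {p : ℕ} [Fact p.Prime]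
    (hgp : ∀ x ∈ S, g ^ p • x = x) : S.ncard ≡ {x ∈ S | g • x = x}.ncard [MOD p] := by
  classical
  have : Fintype S := hfin.fintype
  let f : Function.End S := fun x => ⟨g • x, hg x x.2⟩
  have hiter (n : ℕ) (x : S) : ((f^[n] x : S) : α) = g ^ n • (x : α) := by
    induction n with
    | zero => rw [pow_zero, one_smul]; rfl
    | succ n ih => rw [Function.iterate_succ_apply', pow_succ', mul_smul, ← ih]
  have hf : f ^ p ^ 1 = 1 := by
    funext x
    rw [pow_one]
    exact Subtype.ext ((hiter p x).trans (hgp x x.2))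
  have hfixed : {x ∈ S | g • x = x}.ncard = Fintype.card f.fixedPoints :=
    (ncard_sep_eq_card_subtype fun _ => Subtype.ext_iff).trans Nat.card_eq_fintype_card
  rw [hfixed, ← Nat.card_coe_set_eq, Nat.card_eq_fintype_card]
  exact Equiv.Perm.card_fixedPoints_modEq hf

lemma sum_comp_eq_card_ker_nsmul [Fintype G] [Fintype H] {φ : G →* H}
    (hφ : Function.Surjective φ) {A : Type*} [AddCommMonoid A] (f : H → A) :
    ∑ g, f (φ g) = Nat.card φ.ker • ∑ h, f h := by
  classical
  have hfiber (h : H) : (Finset.univ.filter (φ · = h)).card = Nat.card φ.ker := by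
    rw [MonoidHom.card_fiber_eq_of_mem_range φ (hφ h) ⟨1, map_one φ⟩, Nat.card_eq_fintype_card,
      Fintype.card_subtype]
    simp only [MonoidHom.mem_ker]
  rw [← Finset.sum_fiberwise Finset.univ φ, Finset.smul_sum]
  refine Finset.sum_congr rfl fun h _ => ?_
  rw [Finset.sum_congr rfl fun g hg => by rw [(Finset.mem_filter.1 hg).2], Finset.sum_const,
    hfiber]

lemma map_pow_two_mul_card_ker_eq_one {A : Type*} [CommGroup A] {φ : G →* H}
    (hφ : Function.Surjective φ) (χ : G →* A) {g : G} (hg : IsConj (φ g) (φ g)⁻¹) :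
    χ g ^ (2 * Nat.card φ.ker) = 1 := by
  obtain ⟨σ, hσ⟩ := isConj_iff.1 hg
  obtain ⟨t, rfl⟩ := hφ σ
  have hker : t * g * t⁻¹ * g ∈ φ.ker := by simp [MonoidHom.mem_ker, hσ]
  have hpow : (t * g * t⁻¹ * g) ^ Nat.card φ.ker = 1 :=
    congrArg Subtype.val (pow_card_eq_one' (x := (⟨_, hker⟩ : φ.ker)))
  have hχ : χ (t * g * t⁻¹ * g) = χ g ^ 2 := by simp [sq]
  rw [pow_mul, ← hχ, ← map_pow, hpow, map_one]

lemma card_eq_card_mul_card_ker {φ : G →* H} (hφ : Function.Surjective φ) :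
    Nat.card G = Nat.card H * Nat.card φ.ker := by
  rw [← φ.ker.card_mul_index, Subgroup.index_ker, MonoidHom.range_eq_top.2 hφ, Subgroup.card_top,
    mul_comm]

lemma card_ker_eq_card_inter {L : Subgroup G} {φ : L →* H} {S : Set G}
    (hφ : ∀ x, φ x = 1 ↔ (x : G) ∈ S) : Nat.card φ.ker = Nat.card ((L : Set G) ∩ S : Set G) :=
  Nat.card_congr ((Equiv.subtypeEquivRight hφ).trans
    (Equiv.subtypeSubtypeEquivSubtypeInter (· ∈ L) (· ∈ S)))

lemma isConj_inv_perm {α : Type*} [Finite α] (σ : Equiv.Perm α) : IsConj σ σ⁻¹ := by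
  classical
  have := Fintype.ofFinite α
  rw [Equiv.Perm.isConj_iff_cycleType_eq, Equiv.Perm.cycleType_inv]

lemma sum_perm_fin_three {A : Type*} [AddCommMonoid A] (a b c : A) :
    ∑ σ : Equiv.Perm (Fin 3), (if σ = 1 then a else if σ ^ 2 = 1 then b else c)
      = a + 3 • b + 2 • c := by
  simp only [Finset.sum_ite, Finset.sum_const]
  rw [show (Finset.univ.filter fun σ : Equiv.Perm (Fin 3) => σ = 1).card = 1 by decide,
    show ((Finset.univ.filter fun σ : Equiv.Perm (Fin 3) => ¬σ = 1).filter
      fun σ => σ ^ 2 = 1).card = 3 by decide,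
    show ((Finset.univ.filter fun σ : Equiv.Perm (Fin 3) => ¬σ = 1).filter
      fun σ => ¬σ ^ 2 = 1).card = 2 by decide,
    one_smul, add_assoc]

end GroupTheory

section FiniteField

open Polynomial

variable {F : Type*} [Field F]

lemma ncard_quadratic_le_two {a b c : F} (h : ¬(a = 0 ∧ b = 0 ∧ c = 0)) :
    {u : F | a * u ^ 2 + b * u + c = 0}.ncard ≤ 2 := by
  let p : F[X] := C a * X ^ 2 + C b * X + C c
  have hp : p ≠ 0 := by
    intro h0
    refine h ⟨?_, ?_, ?_⟩
    · simpa [p] using congrArg (coeff · 2) h0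
    · simpa [p] using congrArg (coeff · 1) h0
    · simpa [p] using congrArg (coeff · 0) h0
  have hset : {u : F | a * u ^ 2 + b * u + c = 0} = p.rootSet F := by
    ext u
    simp [p, mem_rootSet_of_ne hp]
  rw [hset]
  exact (ncard_rootSet_le p F).trans natDegree_quadratic_le

variable [Fintype F] {q : ℕ}

lemma one_lt_of_card_eq_sq (hF : Fintype.card F = q ^ 2) : 1 < q :=
  (one_lt_sq_iff₀ q.zero_le).1 (hF ▸ Fintype.one_lt_card)

lemma charP_two_of_card_eq_sq (hF : Fintype.card F = q ^ 2) (hq : Even q) : CharP F 2 :=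
  ringChar.of_eq (FiniteField.even_card_iff_char_two.2 <| Nat.even_iff.1 <| by
    rw [hF]; exact hq.pow_of_ne_zero two_ne_zero)

lemma add_pow_of_card_eq_sq (hF : Fintype.card F = q ^ 2) (x y : F) :
    (x + y) ^ q = x ^ q + y ^ q := by
  obtain ⟨n, hp, hn⟩ := FiniteField.card F (ringChar F)
  have hdvd : q ∣ ringChar F ^ (n : ℕ) := ⟨q, by rw [← hn, hF, sq]⟩
  obtain ⟨m, -, rfl⟩ := (Nat.dvd_prime_pow hp).1 hdvd
  have := Fact.mk hp
  exact add_pow_char_pow x y _ m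

lemma pow_pow_of_card_eq_sq (hF : Fintype.card F = q ^ 2) (x : F) : (x ^ q) ^ q = x := by
  rw [← pow_mul, ← sq, ← hF, FiniteField.pow_card]

lemma exists_isPrimitiveRoot_card_sub_one (F : Type*) [Field F] [Fintype F] :
    ∃ ζ : F, IsPrimitiveRoot ζ (Fintype.card F - 1) := by
  obtain ⟨g, hg⟩ := IsCyclic.exists_ofOrder_eq_natCard (α := Fˣ)
  refine ⟨g, ?_⟩
  rw [← Nat.card_eq_fintype_card, ← Nat.card_units, ← hg]
  exact IsPrimitiveRoot.coe_units_iff.2 (IsPrimitiveRoot.orderOf g)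

lemma ncard_norm_eq (hF : Fintype.card F = q ^ 2) {b : F} (hb : b ^ q = b) (hb0 : b ≠ 0) :
    {x : F | x ^ (q + 1) = b}.ncard = q + 1 := by
  classical
  have hq := one_lt_of_card_eq_sq hF
  obtain ⟨ζ, hζ⟩ := exists_isPrimitiveRoot_card_sub_one F
  have hcard : Fintype.card F - 1 = (q + 1) * (q - 1) := by
    rw [hF, ← Nat.sq_sub_sq, one_pow]
  have hpos : 0 < Fintype.card F - 1 := Nat.sub_pos_of_lt Fintype.one_lt_card
  have hnorm : IsPrimitiveRoot (ζ ^ (q + 1)) (q - 1) := hζ.pow hpos hcard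
  have hker : IsPrimitiveRoot (ζ ^ (q - 1)) (q + 1) := hζ.pow hpos (by rw [hcard, mul_comm])
  have hb1 : b ^ (q - 1) = 1 := by
    rw [← mul_left_inj' hb0, ← pow_succ, Nat.sub_add_cancel hq.le, hb, one_mul]
  have : NeZero (q - 1) := ⟨by omega⟩
  obtain ⟨i, -, hi⟩ := hnorm.eq_pow_of_pow_eq_one hb1
  have hset : {x : F | x ^ (q + 1) = b} = (nthRoots (q + 1) b).toFinset := by
    ext x
    simp [mem_nthRoots]
  rw [hset, Set.ncard_coe_finset, Multiset.toFinset_card_of_nodup (hker.nthRoots_nodup hb0),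
    hker.card_nthRoots, if_pos ⟨ζ ^ i, by rw [← hi, ← pow_mul, ← pow_mul, mul_comm]⟩]

lemma ncard_norm_eq_one (hF : Fintype.card F = q ^ 2) :
    {u : F | u ^ (q + 1) = 1}.ncard = q + 1 :=
  ncard_norm_eq hF (one_pow q) one_ne_zero

lemma card_fiber_norm_sub_norm_eq_one [DecidableEq F] (hF : Fintype.card F = q ^ 2) (x : F) :
    Nat.card {y : F // x ^ (q + 1) - y ^ (q + 1) = 1}
      = if x ^ (q + 1) = 1 then 1 else q + 1 := by
  have hset : {y : F | x ^ (q + 1) - y ^ (q + 1) = 1} = {y | y ^ (q + 1) = x ^ (q + 1) - 1} := by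
    ext y
    rw [Set.mem_ofPred_eq, Set.mem_ofPred_eq]
    exact ⟨fun h => by linear_combination -h, fun h => by linear_combination -h⟩
  refine (congrArg Set.ncard hset).trans ?_
  split_ifs with hx
  · simp [hx]
  · refine ncard_norm_eq hF ?_ (sub_ne_zero.2 hx)
    have hpow := add_pow_of_card_eq_sq hF (x ^ (q + 1) - 1) 1
    rw [sub_add_cancel, one_pow, pow_succ, mul_pow, pow_pow_of_card_eq_sq hF] at hpow
    rw [pow_succ]
    linear_combination -hpow

lemma ncard_norm_sub_norm_eq_one (hF : Fintype.card F = q ^ 2) :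
    {p : F × F | p.1 ^ (q + 1) - p.2 ^ (q + 1) = 1}.ncard = q ^ 3 - q := by
  classical
  have hnorm : (Finset.univ.filter fun x : F => x ^ (q + 1) = 1).card = q + 1 := by
    rw [← Set.ncard_coe_finset]
    simpa using ncard_norm_eq_one hF
  have hcompl := Finset.card_filter_add_card_filter_not (s := Finset.univ)
    fun x : F => x ^ (q + 1) = 1
  rw [hnorm, Finset.card_univ, hF] at hcompl
  have hq : q ≤ q ^ 3 := Nat.le_self_pow three_ne_zero q
  rw [← Nat.card_coe_set_eq, Set.coe_ofPred,
    Nat.card_congr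
      (Equiv.subtypeProdEquivSigmaSubtype fun x y : F => x ^ (q + 1) - y ^ (q + 1) = 1),
    Nat.card_sigma]
  simp only [card_fiber_norm_sub_norm_eq_one hF, Finset.sum_ite, Finset.sum_const, smul_eq_mul,
    hnorm]
  zify [hq] at hcompl ⊢
  linear_combination ((q : ℤ) + 1) * hcompl

end FiniteField

section Arithmetic

lemma two_pow_add_one_mod_three_of_even {h : ℕ} (hh : Even h) : (2 ^ h + 1) % 3 = 2 := by
  obtain ⟨k, rfl⟩ := hh
  simp [← two_mul, pow_mul, Nat.add_mod, Nat.pow_mod]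

lemma two_pow_add_one_mod_three_of_odd {h : ℕ} (hh : Odd h) : (2 ^ h + 1) % 3 = 0 := by
  obtain ⟨k, rfl⟩ := hh
  simp [pow_succ, pow_mul, Nat.add_mod, Nat.mul_mod, Nat.pow_mod]

lemma coprime_six_iff {n : ℕ} : n.Coprime 6 ↔ Odd n ∧ ¬3 ∣ n := by
  rw [show 6 = 2 * 3 from rfl, Nat.coprime_mul_iff_right, Nat.coprime_two_right, Nat.coprime_comm,
    Nat.prime_three.coprime_iff_not_dvd]

end Arithmetic

section Curve

open scoped LinearAlgebra.Projectivization

lemma numOrbits_eq_ncard_image_orbit {F : Type*} [Field F] (L : Subgroup (GL (Fin 3) F))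
    (O : Set (ℙ F (Fin 3 → F))) : numOrbits L O = (MulAction.orbit L '' O).ncard := by
  rw [numOrbits, Nat.card_coe_set_eq]
  congr! with x
  ext y
  exact ⟨fun ⟨g, hg, h⟩ => ⟨⟨g, hg⟩, h⟩, fun ⟨g, h⟩ => ⟨g, g.2, h⟩⟩

section Points

variable {F : Type*} [Field F]

/-- The affine point `(x : y : 1)`, parametrizing the complement of the line at infinity. -/
def affinePt (p : F × F) : ℙ F (Fin 3 → F) :=
  .mk F ![p.1, p.2, 1] fun h => one_ne_zero (congrFun h 2)

/-- The point `(1 : u : 0)`. Only `(0 : 1 : 0)` is missing from this parametrization of the line at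
infinity. -/
def infinityPt (u : F) : ℙ F (Fin 3 → F) :=
  .mk F ![1, u, 0] fun h => one_ne_zero (congrFun h 0)

/-- The line `Z = 0`, which is preserved by `M_ℓ` and splits the curve into two invariant parts. -/
def lineAtInfinity (F : Type*) [Field F] : Set (ℙ F (Fin 3 → F)) := {x | x.rep 2 = 0}

lemma mk_mem_lineAtInfinity {v : Fin 3 → F} (hv : v ≠ 0) :
    .mk F v hv ∈ lineAtInfinity F ↔ v 2 = 0 := by
  obtain ⟨r, hr⟩ := Projectivization.exists_smul_eq_mk_rep F v hv
  simp [lineAtInfinity, ← hr, Units.smul_def]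

lemma mk_mem_hermitianPts {q : ℕ} {v : Fin 3 → F} (hv : v ≠ 0) :
    .mk F v hv ∈ hermitianPts q F ↔ v 1 ^ (q + 1) = v 0 ^ (q + 1) - v 2 ^ (q + 1) := by
  obtain ⟨r, hr⟩ := Projectivization.exists_smul_eq_mk_rep F v hv
  have hr0 : (r : F) ^ (q + 1) ≠ 0 := pow_ne_zero _ r.ne_zero
  simp only [hermitianPts, Set.mem_ofPred_eq, ← hr, Pi.smul_apply, Units.smul_def, smul_eq_mul,
    mul_pow]
  rw [← mul_sub, mul_right_inj' hr0]

lemma affinePt_injective : Function.Injective (affinePt : F × F → ℙ F (Fin 3 → F)) := by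
  rintro ⟨x, y⟩ ⟨x', y'⟩ h
  obtain ⟨r, hr⟩ := (Projectivization.mk_eq_mk_iff' F _ _ _ _).1 h
  obtain rfl : r = 1 := by simpa using congrFun hr 2
  exact Prod.ext (by simpa using (congrFun hr 0).symm) (by simpa using (congrFun hr 1).symm)

lemma infinityPt_injective : Function.Injective (infinityPt : F → ℙ F (Fin 3 → F)) := by
  intro u u' h
  obtain ⟨r, hr⟩ := (Projectivization.mk_eq_mk_iff' F _ _ _ _).1 h
  obtain rfl : r = 1 := by simpa using congrFun hr 0
  simpa using (congrFun hr 1).symm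

lemma hermitianPts_sdiff_lineAtInfinity (q : ℕ) (F : Type*) [Field F] :
    hermitianPts q F \ lineAtInfinity F
      = affinePt '' {p | p.1 ^ (q + 1) - p.2 ^ (q + 1) = 1} := by
  ext x
  constructor
  · induction x with | h v hv
    rw [Set.mem_sdiff, mk_mem_hermitianPts, mk_mem_lineAtInfinity]
    rintro ⟨hO, h2⟩
    refine ⟨(v 0 / v 2, v 1 / v 2), ?_, (Projectivization.mk_eq_mk_iff' F _ _ _ _).2
      ⟨(v 2)⁻¹, ?_⟩⟩
    · rw [Set.mem_ofPred_eq, div_pow, div_pow, ← sub_div, hO, sub_sub_cancel,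
        div_self (pow_ne_zero _ h2)]
    · ext i
      fin_cases i <;> simp [div_eq_inv_mul, h2]
  · rintro ⟨p, hp, rfl⟩
    rw [affinePt, Set.mem_sdiff, mk_mem_hermitianPts, mk_mem_lineAtInfinity]
    refine ⟨?_, by simp⟩
    rw [Set.mem_ofPred_eq] at hp
    simp only [cons_val, one_pow]
    linear_combination -hp

lemma hermitianPts_inter_lineAtInfinity (q : ℕ) (F : Type*) [Field F] :
    hermitianPts q F ∩ lineAtInfinity F = infinityPt '' {u | u ^ (q + 1) = 1} := by
  ext x
  constructor
  · induction x with | h v hv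
    rw [Set.mem_inter_iff, mk_mem_hermitianPts, mk_mem_lineAtInfinity]
    rintro ⟨hO, h2⟩
    rw [h2, zero_pow q.succ_ne_zero, sub_zero] at hO
    have h0 : v 0 ≠ 0 := by
      intro h0
      rw [h0, zero_pow q.succ_ne_zero, pow_eq_zero_iff q.succ_ne_zero] at hO
      exact hv (by ext i; fin_cases i <;> simp [h0, hO, h2])
    refine ⟨v 1 / v 0, ?_, (Projectivization.mk_eq_mk_iff' F _ _ _ _).2 ⟨(v 0)⁻¹, ?_⟩⟩
    · rw [Set.mem_ofPred_eq, div_pow, hO, div_self (pow_ne_zero _ h0)]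
    · ext i
      fin_cases i <;> simp [div_eq_inv_mul, h0, h2]
  · rintro ⟨u, hu, rfl⟩
    rw [infinityPt, Set.mem_inter_iff, mk_mem_hermitianPts, mk_mem_lineAtInfinity]
    exact ⟨by simpa using hu, by simp⟩

variable [Fintype F] {q : ℕ}

lemma ncard_hermitianPts_sdiff_lineAtInfinity (hF : Fintype.card F = q ^ 2) :
    (hermitianPts q F \ lineAtInfinity F).ncard = q ^ 3 - q := by
  rw [hermitianPts_sdiff_lineAtInfinity, Set.ncard_image_of_injective _ affinePt_injective,
    ncard_norm_sub_norm_eq_one hF]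

lemma ncard_hermitianPts_inter_lineAtInfinity (hF : Fintype.card F = q ^ 2) :
    (hermitianPts q F ∩ lineAtInfinity F).ncard = q + 1 := by
  rw [hermitianPts_inter_lineAtInfinity, Set.ncard_image_of_injective _ infinityPt_injective,
    ncard_norm_eq_one hF]

end Points

section Block

variable {F : Type*} [Field F] {M : GL (Fin 3) F} {a b c d : F}

/-- The block matrix `diag(A, 1)` with `A = !![a, b; c, d]`, the common shape of the elements of
`M_ℓ` and of `Z`. -/
def blockOne (a b c d : F) : Matrix (Fin 3) (Fin 3) F := !![a, b, 0; c, d, 0; 0, 0, 1]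

lemma blockOne_one : blockOne 1 0 0 1 = (1 : Matrix (Fin 3) (Fin 3) F) := by
  ext i j
  fin_cases i <;> fin_cases j <;> rfl

lemma det_blockOne (a b c d : F) : (blockOne a b c d).det = a * d - b * c := by
  simp [blockOne, det_fin_three]

lemma blockOne_mulVec (a b c d : F) (v : Fin 3 → F) :
    blockOne a b c d *ᵥ v = ![a * v 0 + b * v 1, c * v 0 + d * v 1, v 2] := by
  ext i
  fin_cases i <;> simp [blockOne, mulVec, dotProduct, Fin.sum_univ_three]

lemma smul_mk_of_eq_blockOne (hM : (M : Matrix (Fin 3) (Fin 3) F) = blockOne a b c d)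
    {v : Fin 3 → F} (hv : v ≠ 0) :
    ∃ h, M • Projectivization.mk F v hv
      = .mk F ![a * v 0 + b * v 1, c * v 0 + d * v 1, v 2] h := by
  have hMv : M • v = ![a * v 0 + b * v 1, c * v 0 + d * v 1, v 2] := by
    rw [Units.smul_def, smul_eq_mulVec, hM, blockOne_mulVec]
  refine ⟨hMv ▸ (smul_ne_zero_iff_ne M).2 hv, ?_⟩
  rw [Projectivization.smul_mk]
  congr!

lemma smul_mem_lineAtInfinity_iff (hM : (M : Matrix (Fin 3) (Fin 3) F) = blockOne a b c d)
    (x : ℙ F (Fin 3 → F)) : M • x ∈ lineAtInfinity F ↔ x ∈ lineAtInfinity F := by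
  induction x with | h v hv
  obtain ⟨h, hMv⟩ := smul_mk_of_eq_blockOne hM hv
  rw [hMv, mk_mem_lineAtInfinity, mk_mem_lineAtInfinity]
  simp

lemma smul_affinePt (hM : (M : Matrix (Fin 3) (Fin 3) F) = blockOne a b c d) (p : F × F) :
    M • affinePt p = affinePt (a * p.1 + b * p.2, c * p.1 + d * p.2) :=
  (smul_mk_of_eq_blockOne hM _).2

lemma smul_infinityPt_eq_iff (hM : (M : Matrix (Fin 3) (Fin 3) F) = blockOne a b c d) (u : F) :
    M • infinityPt u = infinityPt u ↔ b * u ^ 2 + (a - d) * u + -c = 0 := by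
  obtain ⟨h, hMu⟩ := smul_mk_of_eq_blockOne hM (v := ![1, u, 0])
    fun h => one_ne_zero (congrFun h 0)
  rw [infinityPt, hMu, Projectivization.mk_eq_mk_iff']
  constructor
  · rintro ⟨r, hr⟩
    have h0 : r = a + b * u := by simpa using congrFun hr 0
    have h1 : r * u = c + d * u := by simpa using congrFun hr 1
    linear_combination h1 - u * h0
  · intro hu
    refine ⟨a + b * u, ?_⟩
    ext i
    fin_cases i
    · simp
    · simp
      linear_combination hu
    · simp

end Block

section Unitary

variable {F : Type*} [Field F] {q : ℕ} {M : GL (Fin 3) F}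

lemma mem_ZSet_iff :
    M ∈ ZSet q F ↔ ∃ ε, ε ^ (q + 1) = 1 ∧ (M : Matrix (Fin 3) (Fin 3) F) = blockOne ε 0 0 ε := by
  have hdiag (ε : F) : diagonal ![ε, ε, 1] = blockOne ε 0 0 ε := by
    ext i j
    fin_cases i <;> fin_cases j <;> rfl
  simp only [ZSet, hdiag, Set.mem_ofPred_eq]

lemma exists_eq_blockOne_of_mem_MlSet_of_notMem_ZSet (hM : M ∈ MlSet q F) (hMZ : M ∉ ZSet q F) :
    ∃ a b c d, (M : Matrix (Fin 3) (Fin 3) F) = blockOne a b c d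
      ∧ ¬(b = 0 ∧ a - d = 0 ∧ -c = 0) := by
  obtain ⟨a, c, τ, hac, -, hMeq⟩ := hM
  refine ⟨a, τ * c ^ q, c, τ * a ^ q, hMeq, ?_⟩
  rintro ⟨hb, had, hc⟩
  obtain rfl : c = 0 := neg_eq_zero.1 hc
  refine hMZ (mem_ZSet_iff.2 ⟨a, by simpa using hac, ?_⟩)
  rw [hMeq, hb, ← sub_eq_zero.1 had, blockOne]

lemma smul_eq_self_of_mem_ZSet (hM : M ∈ ZSet q F) {x : ℙ F (Fin 3 → F)}
    (hx : x ∈ hermitianPts q F ∩ lineAtInfinity F) : M • x = x := by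
  obtain ⟨ε, -, hMeq⟩ := mem_ZSet_iff.1 hM
  rw [hermitianPts_inter_lineAtInfinity] at hx
  obtain ⟨u, -, rfl⟩ := hx
  exact (smul_infinityPt_eq_iff hMeq u).2 (by ring)

lemma eq_one_of_mem_ZSet_of_smul_eq_self (hM : M ∈ ZSet q F) {x : ℙ F (Fin 3 → F)}
    (hx : x ∈ hermitianPts q F \ lineAtInfinity F) (hMx : M • x = x) : M = 1 := by
  obtain ⟨ε, -, hMeq⟩ := mem_ZSet_iff.1 hM
  rw [hermitianPts_sdiff_lineAtInfinity] at hx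
  obtain ⟨⟨x, y⟩, hxy, rfl⟩ := hx
  rw [smul_affinePt hMeq, affinePt_injective.eq_iff, Prod.mk.injEq] at hMx
  obtain ⟨hεx, hεy⟩ := hMx
  have hε : ε = 1 := by
    simp only [Set.mem_ofPred_eq, pow_succ] at hxy hεx hεy
    linear_combination (1 - ε) * hxy + x ^ q * hεx - y ^ q * hεy
  rw [← Units.val_inj, hMeq, hε, blockOne_one, Units.val_one]

lemma ncard_fixed_infinity_le_two [Finite F] (hM : M ∈ MlSet q F) (hMZ : M ∉ ZSet q F) :
    {x ∈ hermitianPts q F ∩ lineAtInfinity F | M • x = x}.ncard ≤ 2 := by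
  obtain ⟨a, b, c, d, hMeq, hne⟩ := exists_eq_blockOne_of_mem_MlSet_of_notMem_ZSet hM hMZ
  have hsub : {x ∈ hermitianPts q F ∩ lineAtInfinity F | M • x = x}
      ⊆ infinityPt '' {u | b * u ^ 2 + (a - d) * u + -c = 0} := by
    rw [hermitianPts_inter_lineAtInfinity]
    rintro _ ⟨⟨u, -, rfl⟩, hu⟩
    exact ⟨u, (smul_infinityPt_eq_iff hMeq u).1 hu, rfl⟩
  exact (Set.ncard_le_ncard hsub).trans ((Set.ncard_image_le).trans (ncard_quadratic_le_two hne))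

variable [Fintype F]

lemma smul_mem_hermitianPts (hF : Fintype.card F = q ^ 2) (hM : M ∈ MlSet q F)
    {x : ℙ F (Fin 3 → F)} (hx : x ∈ hermitianPts q F) : M • x ∈ hermitianPts q F := by
  obtain ⟨a, c, τ, hac, hτ, hMeq⟩ := hM
  induction x with | h v hv
  obtain ⟨h, hMv⟩ := smul_mk_of_eq_blockOne hMeq hv
  have hform (x y : F) : (a * x + τ * c ^ q * y) ^ (q + 1) - (c * x + τ * a ^ q * y) ^ (q + 1)
      = x ^ (q + 1) - y ^ (q + 1) := by
    simp only [pow_succ, add_pow_of_card_eq_sq hF, mul_pow, pow_pow_of_card_eq_sq hF] at *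
    linear_combination (x ^ q * x - τ ^ q * τ * y ^ q * y) * hac - y ^ q * y * hτ
  rw [mk_mem_hermitianPts] at hx
  rw [hMv, mk_mem_hermitianPts]
  simp only [cons_val]
  linear_combination hx - hform (v 0) (v 1)

lemma smul_mem_hermitianPts_inter_lineAtInfinity (hF : Fintype.card F = q ^ 2)
    (hM : M ∈ MlSet q F) {x : ℙ F (Fin 3 → F)} (hx : x ∈ hermitianPts q F ∩ lineAtInfinity F) :
    M • x ∈ hermitianPts q F ∩ lineAtInfinity F := by
  obtain ⟨a, c, τ, -, -, hMeq⟩ := id hM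
  exact ⟨smul_mem_hermitianPts hF hM hx.1, (smul_mem_lineAtInfinity_iff hMeq x).2 hx.2⟩

lemma eq_one_of_det_eq_one_of_smul_eq_self (hF : Fintype.card F = q ^ 2) (hM : M ∈ MlSet q F)
    (hdet : M.det = 1) {x : ℙ F (Fin 3 → F)} (hx : x ∈ hermitianPts q F \ lineAtInfinity F)
    (hMx : M • x = x) : M = 1 := by
  obtain ⟨a, c, τ, hac, -, hMeq⟩ := hM
  replace hMeq : (M : Matrix (Fin 3) (Fin 3) F) = blockOne a (τ * c ^ q) c (τ * a ^ q) := hMeq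
  have hq : q ≠ 0 := (one_lt_of_card_eq_sq hF).ne_bot
  obtain rfl : τ = 1 := by
    have hdetF : a * (τ * a ^ q) - τ * c ^ q * c = 1 := by
      rw [← det_blockOne, ← hMeq]
      exact congrArg Units.val hdet
    linear_combination hdetF - τ * hac
  rw [hermitianPts_sdiff_lineAtInfinity] at hx
  obtain ⟨⟨x, y⟩, hxy, rfl⟩ := hx
  rw [smul_affinePt hMeq, affinePt_injective.eq_iff, Prod.mk.injEq] at hMx
  simp only [one_mul, Set.mem_ofPred_eq, pow_succ] at hxy hMx
  obtain ⟨hfst, hsnd⟩ := hMx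
  have hfst_pow := congrArg (· ^ q) hfst
  have hsnd_pow := congrArg (· ^ q) hsnd
  simp only [add_pow_of_card_eq_sq hF, mul_pow, pow_pow_of_card_eq_sq hF] at hfst_pow hsnd_pow
  -- Multiply `a` and `c` by `x * x ^ q - y * y ^ q = 1`, then use the two fixed-point equations and
  -- their `q`-th powers.
  have ha : a = 1 := by
    linear_combination (1 - a) * hxy + x ^ q * hfst - y * hsnd_pow
  have hc : c = 0 := by
    linear_combination -c * hxy + x ^ q * hsnd - y * hfst_pow
  rw [← Units.val_inj, hMeq, ha, hc, zero_pow hq, one_pow, mul_zero, mul_one, blockOne_one,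
    Units.val_one]

lemma ncard_fixed_infinity_of_mem_ZSet (hF : Fintype.card F = q ^ 2) (hM : M ∈ ZSet q F) :
    {x ∈ hermitianPts q F ∩ lineAtInfinity F | M • x = x}.ncard = q + 1 := by
  rw [Set.sep_eq_self_iff_mem_true.2 fun x hx => smul_eq_self_of_mem_ZSet hM hx,
    ncard_hermitianPts_inter_lineAtInfinity hF]

lemma card_modEq_ncard_fixed_infinity (hF : Fintype.card F = q ^ 2) (hM : M ∈ MlSet q F) {p : ℕ}
    [Fact p.Prime] (hMp : M ^ p ∈ ZSet q F) :
    q + 1 ≡ {x ∈ hermitianPts q F ∩ lineAtInfinity F | M • x = x}.ncard [MOD p] := by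
  rw [← ncard_hermitianPts_inter_lineAtInfinity hF]
  exact ncard_modEq_ncard_fixed (Set.toFinite _)
    (fun x hx => smul_mem_hermitianPts_inter_lineAtInfinity hF hM hx)
    fun x hx => smul_eq_self_of_mem_ZSet hMp hx

lemma ncard_fixed_infinity_of_sq_mem_ZSet (hF : Fintype.card F = q ^ 2) (hq : Even q)
    (hM : M ∈ MlSet q F) (hMZ : M ∉ ZSet q F) (hM2 : M ^ 2 ∈ ZSet q F) :
    {x ∈ hermitianPts q F ∩ lineAtInfinity F | M • x = x}.ncard = 1 := by
  have hle := ncard_fixed_infinity_le_two hM hMZ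
  have hmod := card_modEq_ncard_fixed_infinity hF hM hM2
  rw [Nat.ModEq, Nat.odd_iff.1 hq.add_one] at hmod
  omega

lemma ncard_fixed_infinity_of_cube_mem_ZSet (hF : Fintype.card F = q ^ 2)
    (hM : M ∈ MlSet q F) (hMZ : M ∉ ZSet q F) (hM3 : M ^ 3 ∈ ZSet q F) :
    {x ∈ hermitianPts q F ∩ lineAtInfinity F | M • x = x}.ncard = (q + 1) % 3 := by
  have hmod := card_modEq_ncard_fixed_infinity hF hM hM3
  rw [hmod, Nat.mod_eq_of_lt (Nat.lt_succ_of_le (ncard_fixed_infinity_le_two hM hMZ))]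

end Unitary

section Orbits

variable {F : Type*} [Field F] [Fintype F] {q : ℕ} {L : Subgroup (GL (Fin 3) F)}

lemma eq_one_of_smul_eq_self {H : Type*} [Group H] {φ : L →* H} (hF : Fintype.card F = q ^ 2)
    (hq : Even q) (hL : (L : Set (GL (Fin 3) F)) ⊆ MlSet q F) (hφ : Function.Surjective φ)
    (hker : ∀ g, φ g = 1 ↔ (g : GL (Fin 3) F) ∈ ZSet q F)
    (hcop : (Nat.card φ.ker).Coprime (Nat.card H)) {g : L} (hg : IsConj (φ g) (φ g)⁻¹)
    {x : ℙ F (Fin 3 → F)} (hx : x ∈ hermitianPts q F \ lineAtInfinity F) (hgx : g • x = x) :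
    g = 1 := by
  have := charP_two_of_card_eq_sq hF hq
  have hdet : GeneralLinearGroup.det (g ^ Nat.card φ.ker : GL (Fin 3) F) = 1 := by
    have hdet_pow := map_pow_two_mul_card_ker_eq_one hφ (GeneralLinearGroup.det.comp L.subtype) hg
    rw [mul_comm, pow_mul, MonoidHom.comp_apply, ← map_pow, Subgroup.subtype_apply] at hdet_pow
    refine Units.ext (CharTwo.sq_injective ?_)
    exact (congrArg Units.val hdet_pow).trans (one_pow 2).symm
  have hgw : g ^ Nat.card φ.ker = 1 := by
    have hgwx : g ^ Nat.card φ.ker • x = x := pow_mem (S := MulAction.stabilizer L x) hgx _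
    exact Subtype.ext
      (eq_one_of_det_eq_one_of_smul_eq_self hF (hL (g ^ Nat.card φ.ker).2) hdet hx hgwx)
  have hφg : φ g = 1 := by
    rw [← orderOf_eq_one_iff]
    refine Nat.eq_one_of_dvd_coprimes hcop (orderOf_dvd_of_pow_eq_one ?_) (orderOf_dvd_natCard _)
    rw [← map_pow, hgw, map_one]
  exact Subtype.ext (eq_one_of_mem_ZSet_of_smul_eq_self ((hker g).1 hφg) hx hgx)

variable {φ : L →* Equiv.Perm (Fin 3)}

lemma ncard_fixed_infinity (hF : Fintype.card F = q ^ 2) (hq : Even q)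
    (hL : (L : Set (GL (Fin 3) F)) ⊆ MlSet q F)
    (hker : ∀ g, φ g = 1 ↔ (g : GL (Fin 3) F) ∈ ZSet q F) (g : L) :
    {x ∈ hermitianPts q F ∩ lineAtInfinity F | g • x = x}.ncard
      = if φ g = 1 then q + 1 else if φ g ^ 2 = 1 then 1 else (q + 1) % 3 := by
  have hgM := hL g.2
  split_ifs with h1 h2
  · exact ncard_fixed_infinity_of_mem_ZSet hF ((hker g).1 h1)
  · refine ncard_fixed_infinity_of_sq_mem_ZSet hF hq hgM (mt (hker g).2 h1) ?_
    exact (hker (g ^ 2)).1 (by rw [map_pow, h2])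
  · have h3 : φ g ^ 3 = 1 := (by decide : ∀ σ : Equiv.Perm (Fin 3), σ ^ 2 ≠ 1 → σ ^ 3 = 1) _ h2
    refine ncard_fixed_infinity_of_cube_mem_ZSet hF hgM (mt (hker g).2 h1) ?_
    exact (hker (g ^ 3)).1 (by rw [map_pow, h3])

lemma ncard_fixed_affine (hF : Fintype.card F = q ^ 2) (hq : Even q)
    (hL : (L : Set (GL (Fin 3) F)) ⊆ MlSet q F) (hφ : Function.Surjective φ)
    (hker : ∀ g, φ g = 1 ↔ (g : GL (Fin 3) F) ∈ ZSet q F)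
    (hcop : (Nat.card φ.ker).Coprime 6) (g : L) [Decidable (g = 1)] :
    {x ∈ hermitianPts q F \ lineAtInfinity F | g • x = x}.ncard
      = if g = 1 then q ^ 3 - q else 0 := by
  split_ifs with h1
  · simp only [h1, one_smul, Set.sep_true, ncard_hermitianPts_sdiff_lineAtInfinity hF]
  · have hcop' : (Nat.card φ.ker).Coprime (Nat.card (Equiv.Perm (Fin 3))) := by
      rwa [Nat.card_perm, Nat.card_fin]
    rw [Set.ncard_eq_zero, Set.eq_empty_iff_forall_notMem]
    rintro x ⟨hx, hgx⟩
    exact h1 (eq_one_of_smul_eq_self hF hq hL hφ hker hcop' (isConj_inv_perm _) hx hgx)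

lemma numOrbits_mul_card (hF : Fintype.card F = q ^ 2) (hq : Even q)
    (hL : (L : Set (GL (Fin 3) F)) ⊆ MlSet q F) (hφ : Function.Surjective φ)
    (hker : ∀ g, φ g = 1 ↔ (g : GL (Fin 3) F) ∈ ZSet q F)
    (hcop : (Nat.card φ.ker).Coprime 6) :
    numOrbits L (hermitianPts q F) * (6 * Nat.card φ.ker)
      = q ^ 3 - q + Nat.card φ.ker * (q + 1 + 3 + 2 * ((q + 1) % 3)) := by
  classical
  have := Fintype.ofFinite L
  have hcard : Nat.card L = 6 * Nat.card φ.ker := by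
    rw [card_eq_card_mul_card_ker hφ, Nat.card_perm, Nat.card_fin]
    rfl
  have hstable (g : L) (x) (hx : x ∈ hermitianPts q F) : g • x ∈ hermitianPts q F :=
    smul_mem_hermitianPts hF (hL g.2) hx
  have hfixed (g : L) : {x ∈ hermitianPts q F | g • x = x}.ncard
      = (if g = 1 then q ^ 3 - q else 0)
        + if φ g = 1 then q + 1 else if φ g ^ 2 = 1 then 1 else (q + 1) % 3 := by
    rw [ncard_sep_eq_sdiff_add_inter (Set.toFinite _) (lineAtInfinity F),
      ncard_fixed_affine hF hq hL hφ hker hcop, ncard_fixed_infinity hF hq hL hker]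
  rw [numOrbits_eq_ncard_image_orbit, ← hcard, ncard_image_orbit_mul_card (Set.toFinite _) hstable,
    Finset.sum_congr rfl fun g _ => hfixed g, Finset.sum_add_distrib, Fintype.sum_ite_eq',
    sum_comp_eq_card_ker_nsmul hφ
      fun σ => if σ = 1 then q + 1 else if σ ^ 2 = 1 then 1 else (q + 1) % 3,
    sum_perm_fin_three]
  simp only [smul_eq_mul, mul_one]

lemma numOrbits_eq (hF : Fintype.card F = q ^ 2) (hq : Even q)
    (hL : (L : Set (GL (Fin 3) F)) ⊆ MlSet q F) (hφ : Function.Surjective φ)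
    (hker : ∀ g, φ g = 1 ↔ (g : GL (Fin 3) F) ∈ ZSet q F)
    (hcop : (Nat.card φ.ker).Coprime 6) :
    (numOrbits L (hermitianPts q F) : ℚ)
      = (q + 4 + 2 * ((q + 1) % 3 : ℕ)) / 6 + ((q : ℚ) ^ 3 - q) / (6 * Nat.card φ.ker) := by
  have hcount := numOrbits_mul_card hF hq hL hφ hker hcop
  have hw : (Nat.card φ.ker : ℚ) ≠ 0 := Nat.cast_ne_zero.2 Nat.card_pos.ne'
  apply_fun ((↑) : ℕ → ℚ) at hcount
  rw [Nat.cast_add, Nat.cast_sub (Nat.le_self_pow three_ne_zero q)] at hcount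
  push_cast at hcount ⊢
  field_simp
  linear_combination hcount

end Orbits

end Curve

theorem stmt5 (h q w : ℕ) (hh : 1 ≤ h) (hq : q = 2 ^ h)
    (F : Type*) [Field F] [Fintype F] (hF : Fintype.card F = q ^ 2)
    (hw : w ∣ q + 1)
    (L : Subgroup (GL (Fin 3) F)) (hLMl : (L : Set (GL (Fin 3) F)) ⊆ MlSet q F)
    (hZcard : Nat.card ((L : Set (GL (Fin 3) F)) ∩ ZSet q F : Set (GL (Fin 3) F)) = w)
    (hquot : ∃ φ : ↥L →* Equiv.Perm (Fin 3), Function.Surjective φ ∧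
      ∀ x : ↥L, φ x = 1 ↔ (x : GL (Fin 3) F) ∈ ZSet q F) :
    (Even h →
      (numOrbits L (hermitianPts q F) : ℚ)
        = ((q : ℚ) + 8) / 6 + ((q : ℚ) / 2) * (((q : ℚ) - 1) / 3) * (((q : ℚ) + 1) / (w : ℚ))) ∧
    (Odd h → ¬ (3 ∣ w) →
      (numOrbits L (hermitianPts q F) : ℚ)
        = ((q : ℚ) + 4) / 6 + ((q : ℚ) ^ 3 - (q : ℚ)) / (6 * (w : ℚ))) := by
  obtain ⟨φ, hφ, hker⟩ := hquot
  have hqeven : Even q := hq ▸ even_two.pow_of_ne_zero (Nat.one_le_iff_ne_zero.1 hh)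
  have hwodd : Odd w := hqeven.add_one.of_dvd_nat hw
  have hcount (h3 : ¬3 ∣ w) := numOrbits_eq hF hqeven hLMl hφ hker <| by
    rw [card_ker_eq_card_inter hker, hZcard]
    exact coprime_six_iff.2 ⟨hwodd, h3⟩
  rw [card_ker_eq_card_inter hker, hZcard] at hcount
  constructor
  · intro heven
    have hmod : (q + 1) % 3 = 2 := hq ▸ two_pow_add_one_mod_three_of_even heven
    have h3 : ¬3 ∣ w := fun h3 => by
      have := h3.trans hw
      omega
    rw [hcount h3, hmod]
    push_cast
    ring
  · intro hodd h3
    have hmod : (q + 1) % 3 = 0 := hq ▸ two_pow_add_one_mod_three_of_odd hodd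
    rw [hcount h3, hmod]
    push_cast
    ring
end
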